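/- Let k be a field, let n, q, r be positive integers, let E be a set of unordered pairs of elements of [n], and let I ⊆ k[x_1,…,x_n] be the ideal generated by {x_i² : i ∈ [n]} ∪ {x_a x_b : {a,b} ∈ E}. Let A = k[x_1,…,x_n]/I and for each d let A_d be the image of the degree-d homogeneous component of k[x_1,…,x_n] under the quotient map. If A_{q+1} = 0, then dim_k A_r ≤ t_r(n,q). -/

import Mathlib

open MvPolynomial

/-- The `i`-th balanced part size of a partition of `n` into `q` parts. -/
def balancedPart (n q : ℕ) (i : Fin q) : ℕ :=
  n / q + if (i : ℕ) < n % q then 1 else 0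

/-- `t_r(n,q) = ∑_{S ⊆ [q], |S| = r} ∏_{i ∈ S} n_i`. -/
def turanNum (n q r : ℕ) : ℕ :=
  ∑ S ∈ (Finset.univ : Finset (Fin q)).powersetCard r, ∏ i ∈ S, balancedPart n q i

/-- The degree-`d` component of the square-zero quadratic monomial quotient
determined by a set `E` of unordered pairs: the image of the homogeneous degree-`d`
polynomials in the quotient `k[x_1,…,x_n]/(x_i², x_a x_b : {a,b} ∈ E)`. -/
noncomputable def sqZeroComponent (k : Type*) [Field k] (n : ℕ)
    (E : Set (Sym2 (Fin n))) (d : ℕ) :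
    Submodule k
      (MvPolynomial (Fin n) k ⧸
        Ideal.span ((Set.range fun i : Fin n => (X i : MvPolynomial (Fin n) k) ^ 2) ∪
          {p | ∃ a b : Fin n, s(a, b) ∈ E ∧ p = X a * X b})) :=
  Submodule.map
    (Ideal.Quotient.mkₐ k
      (Ideal.span ((Set.range fun i : Fin n => (X i : MvPolynomial (Fin n) k) ^ 2) ∪
        {p | ∃ a b : Fin n, s(a, b) ∈ E ∧ p = X a * X b}))).toLinearMap
    (homogeneousSubmodule (Fin n) k d)

/-!
By the monomial criterion for membership in a monomial ideal, the monomials surviving in `A` are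
the squarefree ones whose support is a clique of the graph `G` of pairs not in `E`. Hence
`A_{q+1} = 0` says that `G` has no `(q+1)`-clique, and `A_r` is spanned by the `r`-cliques of `G`.
Zykov's theorem bounds their number. Let `v` lie in the largest number of `r`-cliques and let `N`
be its neighbourhood: an `r`-clique either lies inside `N` or contains one of the vertices outside
`N`, each of which lies in at most as many `r`-cliques as `v`, that is, as `N` has
`(r-1)`-cliques. Since `N` has no `q`-clique, induction bounds the count by an elementary symmetric
sum of the part sizes of a `q`-partite hypergraph, with `V \ N` as the new part, and such a sum only
grows when two part sizes are moved closer together.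
-/

section BalancedParts

variable {R : Type*} [CommSemiring R]

lemma multiset_esymm_zero (s : Multiset R) : s.esymm 0 = 1 := by
  simp [Multiset.esymm]

lemma multiset_esymm_cons_succ (a : R) (s : Multiset R) (r : ℕ) :
    (a ::ₘ s).esymm (r + 1) = s.esymm (r + 1) + a * s.esymm r := by
  simp [Multiset.esymm, Multiset.powersetCard_cons, Multiset.map_map, Multiset.sum_map_mul_left]

lemma multiset_esymm_cons_cons_one (a b : R) (s : Multiset R) :
    (a ::ₘ b ::ₘ s).esymm 1 = s.esymm 1 + (a + b) := by
  simp only [multiset_esymm_cons_succ, multiset_esymm_zero]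
  ring

lemma multiset_esymm_cons_cons_add_two (a b : R) (s : Multiset R) (r : ℕ) :
    (a ::ₘ b ::ₘ s).esymm (r + 2) =
      s.esymm (r + 2) + (a + b) * s.esymm (r + 1) + a * b * s.esymm r := by
  simp only [multiset_esymm_cons_succ]
  ring

lemma multiset_esymm_cons_cons_le [PartialOrder R] [IsOrderedRing R] [CanonicallyOrderedAdd R]
    {a b c d : R} (hadd : a + b = c + d) (hmul : a * b ≤ c * d) (s : Multiset R) (r : ℕ) :
    (a ::ₘ b ::ₘ s).esymm r ≤ (c ::ₘ d ::ₘ s).esymm r := by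
  match r with
  | 0 => simp only [multiset_esymm_zero, le_refl]
  | 1 => simp only [multiset_esymm_cons_cons_one, hadd, le_refl]
  | r + 2 =>
    simp only [multiset_esymm_cons_cons_add_two, hadd]
    gcongr

lemma eq_replicate_add_replicate {α : Type*} [DecidableEq α] {a b : α} (hab : a ≠ b)
    {s : Multiset α} (hs : ∀ x ∈ s, x = a ∨ x = b) :
    s = Multiset.replicate (s.count a) a + Multiset.replicate (s.count b) b := by
  have hfilter : s.filter (· = b) = s.filter (¬ · = a) :=
    Multiset.filter_congr fun x hx => by grind
  rw [← Multiset.filter_eq', ← Multiset.filter_eq', hfilter, Multiset.filter_add_not]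

lemma multiset_eq_of_card_eq_of_sum_eq {m : ℕ} {s t : Multiset ℕ} (hs : ∀ x ∈ s, x = m ∨ x = m + 1)
    (ht : ∀ x ∈ t, x = m ∨ x = m + 1) (hcard : s.card = t.card) (hsum : s.sum = t.sum) :
    s = t := by
  have hs' := eq_replicate_add_replicate m.lt_succ_self.ne hs
  have ht' := eq_replicate_add_replicate m.lt_succ_self.ne ht
  generalize s.count m = i, s.count (m + 1) = j at hs'
  generalize t.count m = i', t.count (m + 1) = j' at ht'
  subst hs' ht'
  simp only [Multiset.card_add, Multiset.card_replicate] at hcard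
  simp only [Multiset.sum_add, Multiset.sum_replicate, smul_eq_mul] at hsum
  have hj : j = j' := by nlinarith
  have hi : i = i' := by omega
  rw [hi, hj]

/-- The multiset of part sizes of the balanced partition of `n` into `q` parts, so that
`turanNum n q r` is its `r`-th elementary symmetric sum. -/
def balancedParts (n q : ℕ) : Multiset ℕ :=
  (Finset.univ : Finset (Fin q)).val.map (balancedPart n q)

lemma turanNum_eq_esymm_balancedParts (n q r : ℕ) :
    turanNum n q r = (balancedParts n q).esymm r := by
  rw [turanNum, balancedParts, Finset.esymm_map_val]

lemma card_balancedParts (n q : ℕ) : (balancedParts n q).card = q := by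
  simp [balancedParts]

lemma eq_or_eq_of_mem_balancedParts {n q x : ℕ} (hx : x ∈ balancedParts n q) :
    x = n / q ∨ x = n / q + 1 := by
  obtain ⟨i, -, rfl⟩ := Multiset.mem_map.1 hx
  unfold balancedPart
  split_ifs <;> simp

lemma sum_balancedParts {n q : ℕ} (h : q = 0 → n = 0) : (balancedParts n q).sum = n := by
  obtain rfl | hq := Nat.eq_zero_or_pos q
  · simp [balancedParts, h rfl]
  have hcount : (Finset.univ.filter fun i : Fin q => (i : ℕ) < n % q).card = n % q := by
    rw [Fin.card_filter_val_lt, min_eq_right (Nat.mod_lt n hq).le]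
  calc (balancedParts n q).sum
      = ∑ i : Fin q, (n / q + if (i : ℕ) < n % q then 1 else 0) := rfl
    _ = q * (n / q) + n % q := by simp [Finset.sum_add_distrib, hcount]
    _ = n := Nat.div_add_mod n q

lemma eq_balancedParts_of_le_add_one {s : Multiset ℕ} (hs : ∀ a ∈ s, ∀ b ∈ s, a ≤ b + 1) :
    s = balancedParts s.sum s.card := by
  obtain rfl | hne := eq_or_ne s 0
  · rfl
  obtain ⟨m, hm, hmin⟩ :=
    s.toFinset.exists_min_image id (Multiset.toFinset_nonempty.2 hne)
  simp only [Multiset.mem_toFinset, id] at hm hmin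
  have hle : s.card * m ≤ s.sum := by simpa using Multiset.card_nsmul_le_sum hmin
  have hlt : s.sum < (m + 1) * s.card := by
    obtain ⟨t, rfl⟩ := Multiset.exists_cons_of_mem hm
    have : t.sum ≤ t.card * (m + 1) :=
      Multiset.sum_le_card_nsmul t (m + 1) fun x hx => hs x (Multiset.mem_cons_of_mem hx) m hm
    simp only [Multiset.sum_cons, Multiset.card_cons]
    linarith
  have hdiv : s.sum / s.card = m := Nat.div_eq_of_lt_le (by linarith) hlt
  refine multiset_eq_of_card_eq_of_sum_eq (m := m) (fun x hx => ?_) (fun x hx => ?_)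
    (card_balancedParts _ _).symm (sum_balancedParts ?_).symm
  · have := hs x hx m hm
    have := hmin x hx
    omega
  · simpa only [hdiv] using eq_or_eq_of_mem_balancedParts hx
  · exact fun h => absurd (Multiset.card_eq_zero.1 h) hne

lemma esymm_le_esymm_balancedParts (s : Multiset ℕ) (r : ℕ) :
    s.esymm r ≤ (balancedParts s.sum s.card).esymm r := by
  induction hN : (s.map (· ^ 2)).sum using Nat.strong_induction_on generalizing s with
  | _ N ih =>
  by_cases hs : ∀ a ∈ s, ∀ b ∈ s, a ≤ b + 1
  · rw [← eq_balancedParts_of_le_add_one hs]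
  push Not at hs
  obtain ⟨a, ha, b, hb, hab⟩ := hs
  obtain ⟨c, rfl⟩ : ∃ c, a = c + 1 := ⟨a - 1, by omega⟩
  obtain ⟨s, rfl⟩ := Multiset.exists_cons_of_mem ha
  obtain ⟨t, rfl⟩ := Multiset.exists_cons_of_mem ((Multiset.mem_cons.1 hb).resolve_left (by omega))
  have hsquares : ((c ::ₘ (b + 1) ::ₘ t).map (· ^ 2)).sum < N := by
    simp only [← hN, Multiset.map_cons, Multiset.sum_cons]
    nlinarith
  have hsum : (c ::ₘ (b + 1) ::ₘ t).sum = ((c + 1) ::ₘ b ::ₘ t).sum := by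
    simp only [Multiset.sum_cons]
    ring
  calc ((c + 1) ::ₘ b ::ₘ t).esymm r
      ≤ (c ::ₘ (b + 1) ::ₘ t).esymm r :=
        multiset_esymm_cons_cons_le (by ring) (by nlinarith) t r
    _ ≤ _ := ih _ hsquares _ rfl
    _ = _ := by simp only [hsum, Multiset.card_cons]

end BalancedParts

section Zykov

open Finset

lemma cliqueFreeOn_one_iff {V : Type*} {G : SimpleGraph V} {s : Set V} :
    G.CliqueFreeOn s 1 ↔ s = ∅ := by
  refine ⟨fun h => Set.eq_empty_of_forall_notMem fun v hv => ?_, ?_⟩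
  · exact h (t := {v}) (by simpa using hv) (by simp)
  · rintro rfl
    simp

variable {V : Type*} [DecidableEq V] (G : SimpleGraph V) [DecidableRel G.Adj]

/-- The `r`-cliques of `G` contained in `U`. Inductions over induced subgraphs become inductions
over `U`, without changing the vertex type. -/
def cliquesOn (U : Finset V) (r : ℕ) : Finset (Finset V) :=
  {T ∈ U.powersetCard r | G.IsClique (T : Set V)}

variable {G} {U : Finset V} {q r : ℕ}

lemma mem_cliquesOn {T : Finset V} : T ∈ cliquesOn G U r ↔ T ⊆ U ∧ G.IsNClique r T := by
  simp only [cliquesOn, mem_filter, mem_powersetCard, SimpleGraph.isNClique_iff]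
  tauto

variable (G) in
lemma cliquesOn_univ [Fintype V] (r : ℕ) : cliquesOn G univ r = G.cliqueFinset r := by
  ext T
  simp only [mem_cliquesOn, subset_univ, true_and, SimpleGraph.mem_cliqueFinset_iff]

variable (G U) in
lemma cliquesOn_zero : cliquesOn G U 0 = {∅} := by
  ext T
  simp +contextual [mem_cliquesOn]

variable (G r) in
lemma cliquesOn_empty_succ : cliquesOn G ∅ (r + 1) = ∅ := by
  simp [cliquesOn]

variable (G U r) in
lemma card_filter_mem_cliquesOn_succ_le (v : V) :
    #{T ∈ cliquesOn G U (r + 1) | v ∈ T} ≤ #(cliquesOn G {w ∈ U | G.Adj v w} r) := by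
  refine card_le_card_of_injOn (·.erase v) (fun T hT => ?_)
    ((erase_injOn' v).mono fun T hT => (mem_filter.1 hT).2)
  obtain ⟨hT, hv⟩ := mem_filter.1 hT
  obtain ⟨hTU, hT⟩ := mem_cliquesOn.1 hT
  refine mem_cliquesOn.2 ⟨fun w hw => ?_, hT.erase_of_mem hv⟩
  obtain ⟨hwv, hwT⟩ := mem_erase.1 hw
  exact mem_filter.2 ⟨hTU hwT, hT.isClique hv hwT hwv.symm⟩

variable (G U r) in
lemma card_cliquesOn_le_add_sum (N : Finset V) :
    #(cliquesOn G U r) ≤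
      #(cliquesOn G N r) + ∑ w ∈ U \ N, #{T ∈ cliquesOn G U r | w ∈ T} := by
  have hcover : cliquesOn G U r ⊆
      cliquesOn G N r ∪ (U \ N).biUnion fun w => {T ∈ cliquesOn G U r | w ∈ T} := by
    intro T hT
    obtain ⟨hTU, hclique⟩ := mem_cliquesOn.1 hT
    by_cases hTN : T ⊆ N
    · exact mem_union_left _ (mem_cliquesOn.2 ⟨hTN, hclique⟩)
    · obtain ⟨w, hwT, hwN⟩ := not_subset.1 hTN
      exact mem_union_right _ (mem_biUnion.2
        ⟨w, mem_sdiff.2 ⟨hTU hwT, hwN⟩, mem_filter.2 ⟨hT, hwT⟩⟩)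
  exact (card_le_card hcover).trans
    ((card_union_le _ _).trans (Nat.add_le_add_left card_biUnion_le _))

variable (G r) in
lemma exists_card_cliquesOn_succ_le (hU : U.Nonempty) :
    ∃ v ∈ U, #(cliquesOn G U (r + 1)) ≤
      #(cliquesOn G {w ∈ U | G.Adj v w} (r + 1)) +
        #(U \ {w ∈ U | G.Adj v w}) * #(cliquesOn G {w ∈ U | G.Adj v w} r) := by
  obtain ⟨v, hv, hmax⟩ :=
    U.exists_max_image (fun w => #{T ∈ cliquesOn G U (r + 1) | w ∈ T}) hU
  refine ⟨v, hv, (card_cliquesOn_le_add_sum G U (r + 1) {w ∈ U | G.Adj v w}).trans ?_⟩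
  gcongr
  refine sum_le_card_nsmul _ _ _ fun w hw => ?_
  exact (hmax w (mem_sdiff.1 hw).1).trans (card_filter_mem_cliquesOn_succ_le G U r v)

lemma card_cliquesOn_le_esymm_balancedParts (hG : G.CliqueFreeOn U (q + 1)) (r : ℕ) :
    #(cliquesOn G U r) ≤ (balancedParts #U q).esymm r := by
  induction q generalizing U r with
  | zero =>
    obtain _ | r := r
    · rw [cliquesOn_zero, card_singleton, multiset_esymm_zero]
    obtain rfl : U = ∅ := coe_eq_empty.1 (cliqueFreeOn_one_iff.1 hG)
    simp only [cliquesOn_empty_succ, card_empty, zero_le]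
  | succ q ih =>
    obtain _ | r := r
    · rw [cliquesOn_zero, card_singleton, multiset_esymm_zero]
    obtain rfl | hU := U.eq_empty_or_nonempty
    · simp only [cliquesOn_empty_succ, card_empty, zero_le]
    obtain ⟨v, hv, hle⟩ := exists_card_cliquesOn_succ_le G r hU
    set N := {w ∈ U | G.Adj v w}
    have hN : G.CliqueFreeOn N (q + 1) :=
      (hG.of_succ G hv).subset G fun w hw => mem_filter.1 hw
    have hempty : q = 0 → #N = 0 := by
      rintro rfl
      exact card_eq_zero.2 (coe_eq_empty.1 (cliqueFreeOn_one_iff.1 hN))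
    have hsum : (#(U \ N) ::ₘ balancedParts #N q).sum = #U := by
      rw [Multiset.sum_cons, sum_balancedParts hempty,
        card_sdiff_add_card_eq_card (filter_subset _ _)]
    calc #(cliquesOn G U (r + 1))
        ≤ #(cliquesOn G N (r + 1)) + #(U \ N) * #(cliquesOn G N r) := hle
      _ ≤ (balancedParts #N q).esymm (r + 1) + #(U \ N) * (balancedParts #N q).esymm r := by
        gcongr <;> exact ih hN _
      _ = (#(U \ N) ::ₘ balancedParts #N q).esymm (r + 1) :=
        (multiset_esymm_cons_succ _ _ _).symm
      _ ≤ _ := esymm_le_esymm_balancedParts _ _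
      _ = (balancedParts #U (q + 1)).esymm (r + 1) := by
        rw [hsum, Multiset.card_cons, card_balancedParts]

theorem card_cliqueFinset_le_turanNum [Fintype V] (hG : G.CliqueFree (q + 1)) (r : ℕ) :
    #(G.cliqueFinset r) ≤ turanNum (Fintype.card V) q r := by
  rw [← cliquesOn_univ, turanNum_eq_esymm_balancedParts, ← card_univ]
  exact card_cliquesOn_le_esymm_balancedParts hG.cliqueFreeOn r

end Zykov

section SqZeroIdeal

variable {σ : Type*} {E : Set (Sym2 σ)}

lemma single_add_single_self_le_iff {a : σ} {d : σ →₀ ℕ} :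
    Finsupp.single a 1 + Finsupp.single a 1 ≤ d ↔ 1 < d a := by
  rw [← Finsupp.single_add, Finsupp.single_le_iff]
  rfl

lemma single_add_single_le_iff {a b : σ} (hab : a ≠ b) {d : σ →₀ ℕ} :
    Finsupp.single a 1 + Finsupp.single b 1 ≤ d ↔ a ∈ d.support ∧ b ∈ d.support := by
  classical
  simp only [Finsupp.le_def, Finsupp.add_apply, Finsupp.single_apply, Finsupp.mem_support_iff]
  grind

/-- The ideal generated by the squares of all variables and by the products `X a * X b` with
`{a, b} ∈ E`, so that `sqZeroComponent` consists of graded pieces of the quotient by it. -/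
noncomputable abbrev sqZeroIdeal (R : Type*) [CommSemiring R] (E : Set (Sym2 σ)) :
    Ideal (MvPolynomial σ R) :=
  Ideal.span ((Set.range fun i : σ => (X i : MvPolynomial σ R) ^ 2) ∪
    {p | ∃ a b : σ, s(a, b) ∈ E ∧ p = X a * X b})

lemma exists_single_add_single_le_iff {d : σ →₀ ℕ} :
    (∃ a b, (a = b ∨ s(a, b) ∈ E) ∧ Finsupp.single a 1 + Finsupp.single b 1 ≤ d) ↔
      ¬((∀ i, d i ≤ 1) ∧ (SimpleGraph.fromEdgeSet E)ᶜ.IsClique (d.support : Set σ)) := by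
  rw [SimpleGraph.isClique_compl, SimpleGraph.isIndepSet_iff, not_and_or]
  constructor
  · rintro ⟨a, b, hE, hle⟩
    obtain rfl | hab := eq_or_ne a b
    · exact Or.inl fun h => (single_add_single_self_le_iff.1 hle).not_ge (h a)
    · obtain ⟨ha, hb⟩ := (single_add_single_le_iff hab).1 hle
      exact Or.inr fun h => h ha hb hab
        ((SimpleGraph.fromEdgeSet_adj _).2 ⟨hE.resolve_left hab, hab⟩)
  · rintro (h | h)
    · push Not at h
      obtain ⟨a, ha⟩ := h
      exact ⟨a, a, Or.inl rfl, single_add_single_self_le_iff.2 ha⟩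
    · simp only [Set.Pairwise, not_forall, not_not] at h
      obtain ⟨a, ha, b, hb, hab, hadj⟩ := h
      exact ⟨a, b, Or.inr ((SimpleGraph.fromEdgeSet_adj _).1 hadj).1,
        (single_add_single_le_iff hab).2 ⟨ha, hb⟩⟩

variable (E) in
lemma sqZeroIdeal_eq_span_monomial (R : Type*) [CommSemiring R] :
    sqZeroIdeal R E = Ideal.span ((fun d => monomial d (1 : R)) ''
      {d | ∃ a b, (a = b ∨ s(a, b) ∈ E) ∧ Finsupp.single a 1 + Finsupp.single b 1 = d}) := by
  have hmul (a b : σ) : monomial (Finsupp.single a 1 + Finsupp.single b 1) (1 : R) = X a * X b := by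
    rw [X, X, monomial_mul, one_mul]
  rw [sqZeroIdeal]
  congr 1
  ext p
  constructor
  · rintro (⟨a, rfl⟩ | ⟨a, b, hE, rfl⟩)
    · exact ⟨_, ⟨a, a, Or.inl rfl, rfl⟩, (hmul a a).trans (sq _).symm⟩
    · exact ⟨_, ⟨a, b, Or.inr hE, rfl⟩, hmul a b⟩
  · rintro ⟨_, ⟨a, b, rfl | hE, rfl⟩, rfl⟩
    · exact Or.inl ⟨a, (sq _).trans (hmul a a).symm⟩
    · exact Or.inr ⟨a, b, hE, hmul a b⟩

lemma monomial_mem_sqZeroIdeal_iff {R : Type*} [CommSemiring R] [Nontrivial R] {d : σ →₀ ℕ} :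
    monomial d (1 : R) ∈ sqZeroIdeal R E ↔
      ¬((∀ i, d i ≤ 1) ∧ (SimpleGraph.fromEdgeSet E)ᶜ.IsClique (d.support : Set σ)) := by
  classical
  rw [sqZeroIdeal_eq_span_monomial, mem_ideal_span_monomial_image,
    support_monomial, if_neg one_ne_zero, ← exists_single_add_single_le_iff]
  simp only [Finset.mem_singleton, forall_eq, Set.mem_ofPred_eq]
  grind

/-- The exponent vector of the squarefree monomial `∏ i ∈ T, X i`. -/
noncomputable def squarefreeExponent (T : Finset σ) : σ →₀ ℕ :=
  Finsupp.indicator T fun _ _ => 1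

lemma squarefreeExponent_le_one (T : Finset σ) (i : σ) : squarefreeExponent T i ≤ 1 := by
  classical
  rw [squarefreeExponent, Finsupp.indicator_apply]
  split_ifs <;> simp

lemma support_squarefreeExponent (T : Finset σ) : (squarefreeExponent T).support = T := by
  classical
  ext i
  simp [squarefreeExponent, Finsupp.indicator_apply]

lemma squarefreeExponent_support_eq_self {d : σ →₀ ℕ} (hd : ∀ i, d i ≤ 1) :
    squarefreeExponent d.support = d := by
  classical
  ext i
  have := hd i
  simp only [squarefreeExponent, Finsupp.indicator_apply, Finsupp.mem_support_iff]
  grind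

lemma degree_squarefreeExponent (T : Finset σ) : (squarefreeExponent T).degree = T.card := by
  rw [Finsupp.degree_apply, support_squarefreeExponent, Finset.card_eq_sum_ones]
  exact Finset.sum_congr rfl fun i hi => Finsupp.indicator_of_mem hi _

lemma homogeneousSubmodule_eq_span_monomial (σ R : Type*) [CommSemiring R] (r : ℕ) :
    homogeneousSubmodule σ R r =
      Submodule.span R ((fun d => monomial d (1 : R)) '' {d | d.degree = r}) := by
  rw [homogeneousSubmodule_eq_finsupp_supported, AddMonoidAlgebra.supported_eq_span_single]
  rfl

variable (E) in
lemma map_homogeneousSubmodule_le_span (R : Type*) [CommRing R] [Nontrivial R] (r : ℕ) :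
    (homogeneousSubmodule σ R r).map (Ideal.Quotient.mkₐ R (sqZeroIdeal R E)).toLinearMap ≤
      Submodule.span R ((fun T => Ideal.Quotient.mkₐ R (sqZeroIdeal R E)
        (monomial (squarefreeExponent T) 1)) '' (SimpleGraph.fromEdgeSet E)ᶜ.cliqueSet r) := by
  rw [homogeneousSubmodule_eq_span_monomial, Submodule.map_span_le]
  rintro _ ⟨d, hd, rfl⟩
  by_cases hmem : monomial d (1 : R) ∈ sqZeroIdeal R E
  · convert! Submodule.zero_mem _
    exact Ideal.Quotient.eq_zero_iff_mem.2 hmem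
  · obtain ⟨hle, hclique⟩ := not_not.1 (monomial_mem_sqZeroIdeal_iff.not.1 hmem)
    have hd' := squarefreeExponent_support_eq_self hle
    have hcard : d.support.card = r := by
      rw [← degree_squarefreeExponent, hd']
      exact hd
    refine Submodule.subset_span ⟨d.support, ⟨hclique, hcard⟩, ?_⟩
    simp only [hd', AlgHom.toLinearMap_apply]

end SqZeroIdeal

section SqZeroComponent

variable {k : Type*} [Field k] {n : ℕ} {E : Set (Sym2 (Fin n))} {r : ℕ}

lemma cliqueFree_of_sqZeroComponent_eq_bot (h : sqZeroComponent k n E r = ⊥) :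
    (SimpleGraph.fromEdgeSet E)ᶜ.CliqueFree r := by
  intro T hT
  have hhom : (monomial (squarefreeExponent T) (1 : k)).IsHomogeneous r :=
    isHomogeneous_monomial 1 ((degree_squarefreeExponent T).trans hT.card_eq)
  have hzero : Ideal.Quotient.mkₐ k (sqZeroIdeal k E) (monomial (squarefreeExponent T) 1) = 0 :=
    (Submodule.eq_bot_iff _).1 h _ ⟨_, hhom, rfl⟩
  refine monomial_mem_sqZeroIdeal_iff.1 (Ideal.Quotient.eq_zero_iff_mem.1 hzero)
    ⟨squarefreeExponent_le_one T, ?_⟩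
  rw [support_squarefreeExponent]
  exact hT.isClique

variable (k E r) in
lemma finrank_sqZeroComponent_le [DecidableRel (SimpleGraph.fromEdgeSet E)ᶜ.Adj] :
    Module.finrank k (sqZeroComponent k n E r) ≤
      ((SimpleGraph.fromEdgeSet E)ᶜ.cliqueFinset r).card := by
  classical
  have hspan := map_homogeneousSubmodule_le_span E k r
  rw [← SimpleGraph.coe_cliqueFinset, ← Finset.coe_image] at hspan
  exact (Submodule.finrank_mono hspan).trans
    ((finrank_span_finset_le_card _).trans Finset.card_image_le)

end SqZeroComponent

/-- if `A` is a square-zero quadratic monomial quotient of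
`k[x_1,…,x_n]` with `A_{q+1} = 0`, then `dim_k A_r ≤ t_r(n,q)`. -/
theorem hilbert_turan_bound (k : Type*) [Field k] (n q r : ℕ)
    (hn : 0 < n) (hq : 0 < q) (hr : 0 < r) (E : Set (Sym2 (Fin n)))
    (hvanish : sqZeroComponent k n E (q + 1) = ⊥) :
    Module.finrank k (sqZeroComponent k n E r) ≤ turanNum n q r := by
  classical
  calc Module.finrank k (sqZeroComponent k n E r)
      ≤ ((SimpleGraph.fromEdgeSet E)ᶜ.cliqueFinset r).card := finrank_sqZeroComponent_le k E r
    _ ≤ turanNum (Fintype.card (Fin n)) q r :=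
      card_cliqueFinset_le_turanNum (cliqueFree_of_sqZeroComponent_eq_bot hvanish) r
    _ = turanNum n q r := by rw [Fintype.card_fin]
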